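/- arXiv:1803.04174 — 3 statements merged into one kernel-verified Lean document; each statement's English description precedes it below -/
import Mathlib

section
/- Let p_1 < p_2 < ... < p_n be positive real numbers and let B be the n×n matrix with (i,j) entry (p_i + p_j)^(p_i + p_j). Then B is positive definite: ⟨x, Bx⟩ > 0 for every nonzero vector x ∈ ℝ^n. -/
/-!
For `x > 0` let `f x s = (1 - exp (-x s)) / s = ∫ a in 0..x, exp (-a s)`. By Fubini and Frullani's
integral, the inner product of `f x` and `f y` in `L²(0, ∞)` is
`K x y = (x + y) log (x + y) - x log x - y log y`, and the functions `f x` are linearly independent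
because distinct exponentials are. So `K` is the Gram matrix of linearly independent vectors, hence
positive definite. Schur's product theorem, applied to the powers in the exponential series, shows
that the entrywise exponential of `K` is positive definite too, and
`(x + y) ^ (x + y) = x ^ x * exp (K x y) * y ^ y`.
-/

section PosDef

open Matrix MeasureTheory
open scoped ComplexOrder InnerProductSpace

variable {ι 𝕜 : Type*} [RCLike 𝕜]

theorem posDef_of_posDef_submatrix_finset {R : Type*} [Ring R] [PartialOrder R] [StarRing R]
    {A : Matrix ι ι R} (hA : ∀ s : Finset ι, (A.submatrix ((↑) : s → ι) (↑)).PosDef) :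
    A.PosDef := by
  classical
  refine ⟨?_, fun x hx => ?_⟩
  · ext i j
    exact (hA {i, j}).isHermitian.apply ⟨i, by simp⟩ ⟨j, by simp⟩
  · have hne : x.subtypeDomain (· ∈ x.support) ≠ 0 :=
      (Finsupp.subtypeDomain_eq_zero_iff fun _ => id).not.2 hx
    simpa [Finsupp.sum, ← Finset.sum_attach x.support, ← Finset.subtype_mem_eq_attach,
      ← Finsupp.subtypeDomain_apply, ← Finsupp.support_subtypeDomain] using (hA x.support).2 hne

theorem gram_toLp {α : Type*} {m : MeasurableSpace α} {μ : Measure α} {f : ι → α → 𝕜}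
    (hf : ∀ i, MemLp (f i) 2 μ) :
    gram 𝕜 (fun i => (hf i).toLp (f i)) = of fun i j => ∫ a, star (f i a) * f j a ∂μ := by
  ext i j
  rw [gram_apply, L2.inner_def, of_apply]
  refine integral_congr_ae ?_
  filter_upwards [(hf i).coeFn_toLp, (hf j).coeFn_toLp] with a hi hj
  rw [hi, hj, RCLike.inner_apply', RCLike.star_def]

theorem posDef_integral_star_mul {α : Type*} {m : MeasurableSpace α} {μ : Measure α}
    {f : ι → α → 𝕜} (hf : ∀ i, MemLp (f i) 2 μ)
    (hli : LinearIndependent 𝕜 fun i => (hf i).toLp (f i)) :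
    (of fun i j => ∫ a, star (f i a) * f j a ∂μ).PosDef := by
  rw [← gram_toLp hf]
  exact posDef_of_posDef_submatrix_finset fun _ =>
    posDef_gram_of_linearIndependent (hli.comp _ Subtype.val_injective)

theorem posDef_star_mul_mul {R : Type*} [Ring R] [PartialOrder R] [StarRing R] [NoZeroDivisors R]
    {A : Matrix ι ι R} (hA : A.PosDef) {d : ι → R} (hd : ∀ i, d i ≠ 0) :
    (of fun i j => star (d i) * A i j * d j).PosDef := by
  refine ⟨?_, fun x hx => ?_⟩
  · ext i j
    simp [← hA.isHermitian.apply i j, mul_assoc]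
  · have hdx : d • x ≠ 0 := by
      obtain ⟨i, hi⟩ := Finsupp.ne_iff.1 hx
      exact Finsupp.ne_iff.2 ⟨i, by simpa using ⟨hd i, hi⟩⟩
    have hsupp : (d • x).support = x.support := by
      ext i
      simp [hd i]
    simpa [Finsupp.sum, hsupp, mul_assoc] using hA.2 hdx

theorem posSemidef_of_hasSum {κ R : Type*} [Ring R] [PartialOrder R] [StarRing R]
    [TopologicalSpace R] [IsTopologicalSemiring R] [ContinuousStar R] [OrderClosedTopology R]
    [IsOrderedAddMonoid R] {M : κ → Matrix ι ι R} {S : Matrix ι ι R}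
    (hM : ∀ k, (M k).PosSemidef) (hS : HasSum M S) : S.PosSemidef := by
  have hentry (i j) : HasSum (fun k => M k i j) (S i j) := Pi.hasSum.1 (Pi.hasSum.1 hS i) j
  refine ⟨?_, fun x => ?_⟩
  · ext i j
    refine (hentry j i).star.unique ?_
    simpa only [(hM _).isHermitian.apply] using hentry i j
  · exact (hasSum_sum fun i _ => hasSum_sum fun j _ =>
      ((hentry i j).mul_left _).mul_right _).nonneg fun k => (hM k).2 x

theorem posSemidef_map_pow {A : Matrix ι ι 𝕜} (hA : A.PosSemidef) (k : ℕ) :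
    (A.map (· ^ k)).PosSemidef := by
  induction k with
  | zero =>
    refine ⟨by ext; simp, fun x => ?_⟩
    simpa [Finsupp.sum, ← Finset.mul_sum, ← Finset.sum_mul] using
      star_mul_self_nonneg (∑ i ∈ x.support, x i)
  | succ k ih =>
    convert! ih.hadamard hA using 1
    ext i j
    simp [pow_succ]

theorem posSemidef_map_of_hasSum {A : Matrix ι ι 𝕜} (hA : A.PosSemidef) {c : ℕ → ℝ}
    (hc : ∀ k, 0 ≤ c k) {g : 𝕜 → 𝕜} (hg : ∀ i j, HasSum (fun k => c k • A i j ^ k) (g (A i j))) :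
    (A.map g).PosSemidef :=
  posSemidef_of_hasSum (fun k => (posSemidef_map_pow hA k).smul (hc k)) <|
    Pi.hasSum.2 fun i => Pi.hasSum.2 fun j => hg i j

theorem posDef_map_of_hasSum {A : Matrix ι ι 𝕜} (hA : A.PosDef) {c : ℕ → ℝ}
    (hc : ∀ k, 0 ≤ c k) (hc₁ : 0 < c 1) {g : 𝕜 → 𝕜}
    (hg : ∀ i j, HasSum (fun k => c k • A i j ^ k) (g (A i j))) :
    (A.map g).PosDef := by
  -- Strict positivity comes from the linear term alone.
  have hrest : (A.map fun z => g z - c 1 • z).PosSemidef := by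
    refine posSemidef_map_of_hasSum (c := Function.update c 1 0) hA.posSemidef
      (fun k => ?_) (fun i j => ?_)
    · rcases eq_or_ne k 1 with rfl | hk <;> simp [*]
    · convert! (hg i j).update 1 0 using 1
      · ext k
        rcases eq_or_ne k 1 with rfl | hk <;> simp [*]
      · rw [pow_one]; abel
  convert! (hA.smul hc₁).add_posSemidef hrest using 1
  ext i j
  simp

theorem posDef_map_exp {A : Matrix ι ι 𝕜} (hA : A.PosDef) : (A.map NormedSpace.exp).PosDef :=
  posDef_map_of_hasSum hA (c := fun k => (k.factorial : ℝ)⁻¹) (fun _ => by positivity)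
    (by norm_num) fun _ _ => NormedSpace.exp_series_hasSum_exp' _

end PosDef

section LinearIndependent

open MeasureTheory Real Set

theorem linearIndependent_toLp_of_continuousOn {ι 𝕜 X E : Type*} [NormedField 𝕜]
    [NormedAddCommGroup E] [NormedSpace 𝕜 E] [TopologicalSpace X]
    [MeasurableSpace X] {μ : Measure X} [μ.IsOpenPosMeasure] {U : Set X} (hU : IsOpen U)
    {p : ENNReal} {f : ι → X → E} (hf : ∀ i, MemLp (f i) p (μ.restrict U))
    (hcont : ∀ i, ContinuousOn (f i) U)
    (hli : LinearIndependent 𝕜 fun i => U.domRestrict (f i)) :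
    LinearIndependent 𝕜 fun i => (hf i).toLp (f i) := by
  rw [linearIndependent_iff'] at hli ⊢
  refine fun s c hc => hli s c ?_
  have hae : (fun x => ∑ i ∈ s, c i • f i x) =ᵐ[μ.restrict U] fun _ => 0 := by
    have hsum := Lp.coeFn_finsetSum s fun i => c i • (hf i).toLp (f i)
    rw [hc] at hsum
    have hterm : ∀ᵐ x ∂μ.restrict U, ∀ i ∈ s, (c i • (hf i).toLp (f i)) x = c i • f i x :=
      (Filter.eventually_all_finset s).2 fun i _ =>
        (Lp.coeFn_smul _ _).trans ((hf i).coeFn_toLp.const_smul (c i))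
    filter_upwards [hsum, hterm, Lp.coeFn_zero E p (μ.restrict U)] with x hsum hterm hzero
    rw [← Finset.sum_congr rfl hterm, ← Finset.sum_apply, ← hsum, hzero, Pi.zero_apply]
  have hon := Measure.eqOn_open_of_ae_eq hae hU
    (continuousOn_finsetSum _ fun i _ => continuousOn_const.smul (hcont i)) continuousOn_const
  ext x
  simpa using hon x.2

theorem linearIndependent_exp_neg_mul_natCast :
    LinearIndependent ℝ fun (x : ℝ) (k : ℕ) => exp (-(x * k)) := by
  let χ (x : ℝ) : Multiplicative ℕ →* ℝ := powersHom ℝ (exp (-x))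
  have hχ : Function.Injective χ := fun x y h => by simpa [χ] using h
  convert! (linearIndependent_monoidHom (Multiplicative ℕ) ℝ).comp χ hχ using 1
  ext x k
  change exp (-(x * k)) = exp (-x) ^ k
  rw [← exp_nat_mul, mul_neg, mul_comm]

end LinearIndependent

section IndicatorLaplace

open MeasureTheory Real Set

variable {a x y s : ℝ}

/-- The Laplace transform of the indicator function of `[0, x]`, in closed form. At `s = 0`, where
the transform equals `x`, the junk value of the division gives `0`; only `s > 0` matters. -/
noncomputable def indicatorLaplace (x s : ℝ) : ℝ := (1 - exp (-(x * s))) / s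

theorem measurable_indicatorLaplace (x : ℝ) : Measurable (indicatorLaplace x) := by
  unfold indicatorLaplace
  fun_prop

theorem continuousOn_indicatorLaplace (x : ℝ) : ContinuousOn (indicatorLaplace x) (Ioi 0) :=
  ContinuousOn.div (by fun_prop) (by fun_prop) fun _ hs => (mem_Ioi.1 hs).ne'

theorem linearIndependent_indicatorLaplace :
    LinearIndependent ℝ fun x : {x : ℝ // x ≠ 0} => (Ioi 0).domRestrict (indicatorLaplace x) := by
  have hdiff : LinearIndependent ℝ fun (x : {x : ℝ // x ≠ 0}) (k : ℕ) => exp (-(x * k)) - 1 := by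
    simpa [Pi.sub_def] using (affineIndependent_iff_linearIndependent_vsub ℝ _ (0 : ℝ)).1
      (linearIndependent_exp_neg_mul_natCast.affineIndependent ℝ)
  rw [linearIndependent_iff'] at hdiff ⊢
  refine fun t c hc => hdiff t c <| funext fun k => ?_
  rcases k.eq_zero_or_pos with rfl | hk₀
  · simp
  have hk : (0 : ℝ) < k := Nat.cast_pos.2 hk₀
  have hsub (x : ℝ) : exp (-(x * k)) - 1 = -k * indicatorLaplace x k := by
    rw [indicatorLaplace]
    field_simp
    ring
  have h : ∑ x ∈ t, c x * indicatorLaplace x k = 0 := by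
    simpa only [Finset.sum_apply, Pi.smul_apply, smul_eq_mul, domRestrict_apply,
      Pi.zero_apply] using congrFun hc ⟨k, hk⟩
  simp only [Finset.sum_apply, Pi.smul_apply, smul_eq_mul, hsub, mul_left_comm (c _),
    ← Finset.mul_sum, h, mul_zero, Pi.zero_apply]

theorem integral_exp_neg_mul (x : ℝ) (hs : s ≠ 0) :
    ∫ a in 0..x, exp (-(a * s)) = indicatorLaplace x s := by
  simp only [← mul_neg, indicatorLaplace]
  rw [intervalIntegral.integral_comp_mul_right _ (neg_ne_zero.2 hs), integral_exp, zero_mul,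
    exp_zero, smul_eq_mul]
  field_simp
  ring

theorem indicatorLaplace_nonneg (hx : 0 ≤ x) (hs : 0 < s) : 0 ≤ indicatorLaplace x s :=
  div_nonneg (sub_nonneg.2 <| exp_le_one_iff.2 <| neg_nonpos.2 <| by positivity) hs.le

theorem indicatorLaplace_le (x : ℝ) (hs : 0 < s) : indicatorLaplace x s ≤ x := by
  rw [indicatorLaplace, div_le_iff₀ hs]
  linarith [one_sub_le_exp_neg (x * s)]

theorem integrableOn_exp_neg_mul_indicatorLaplace (ha : 0 < a) (hy : 0 ≤ y) :
    IntegrableOn (fun s => exp (-(a * s)) * indicatorLaplace y s) (Ioi 0) := by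
  have hexp : IntegrableOn (fun s => exp (-(a * s))) (Ioi 0) := by
    simpa only [neg_mul] using integrableOn_exp_mul_Ioi (neg_lt_zero.2 ha) 0
  refine hexp.mul_bdd (c := y) (measurable_indicatorLaplace y).aestronglyMeasurable ?_
  filter_upwards [ae_restrict_mem measurableSet_Ioi] with s hs
  rw [norm_of_nonneg (indicatorLaplace_nonneg hy hs)]
  exact indicatorLaplace_le y hs

theorem integral_exp_neg_mul_indicatorLaplace (ha : 0 < a) (hy : 0 ≤ y) :
    ∫ s in Ioi 0, exp (-(a * s)) * indicatorLaplace y s = log ((a + y) / a) := by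
  have hfrullani (s : ℝ) : exp (-(a * s)) * indicatorLaplace y s =
      s⁻¹ • (exp (-(a * s)) - exp (-((a + y) * s))) := by
    rw [indicatorLaplace, add_mul, neg_add, exp_add, smul_eq_mul]
    ring
  have hint := integrableOn_exp_neg_mul_indicatorLaplace ha hy
  simp only [hfrullani] at hint ⊢
  have hcont : Continuous fun t : ℝ => exp (-t) := by fun_prop
  have h := Frullani.integral_Ioi_eq (hcont.locallyIntegrable.locallyIntegrableOn (Ioi 0)) ha
    (by positivity) (hcont.tendsto' 0 1 (by simp) |>.mono_left nhdsWithin_le_nhds)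
    tendsto_exp_neg_atTop_nhds_zero hint
  simpa using h

theorem intervalIntegrable_log_add (a b y : ℝ) :
    IntervalIntegrable (fun t => log (t + y)) volume a b := by
  simpa using (intervalIntegral.intervalIntegrable_log' (a := a + y) (b := b + y)).comp_add_right y

theorem log_add_div_self (ha : 0 < a) (hy : 0 ≤ y) :
    log ((a + y) / a) = log (a + y) - log a := log_div (by positivity) ha.ne'

theorem intervalIntegrable_log_add_div_self (hx : 0 ≤ x) (hy : 0 ≤ y) :
    IntervalIntegrable (fun a => log ((a + y) / a)) volume 0 x :=
  ((intervalIntegrable_log_add 0 x y).sub intervalIntegral.intervalIntegrable_log').congr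
    fun _ ha => (log_add_div_self (uIoc_of_le hx ▸ ha).1 hy).symm

theorem integral_log_add_div_self (hx : 0 ≤ x) (hy : 0 ≤ y) :
    ∫ a in 0..x, log ((a + y) / a) = (x + y) * log (x + y) - x * log x - y * log y := by
  calc ∫ a in 0..x, log ((a + y) / a) = ∫ a in 0..x, (log (a + y) - log a) :=
        intervalIntegral.integral_congr_ae <| .of_forall fun _ ha =>
          log_add_div_self (uIoc_of_le hx ▸ ha).1 hy
    _ = (∫ a in y..x + y, log a) - ∫ a in 0..x, log a := by
        rw [intervalIntegral.integral_sub (intervalIntegrable_log_add 0 x y)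
          intervalIntegral.intervalIntegrable_log', intervalIntegral.integral_comp_add_right log,
          zero_add]
    _ = (x + y) * log (x + y) - x * log x - y * log y := by
        rw [integral_log, integral_log_from_zero]
        ring

theorem integrable_exp_neg_mul_indicatorLaplace_prod (hx : 0 ≤ x) (hy : 0 ≤ y) :
    Integrable (Function.uncurry fun a s => exp (-(a * s)) * indicatorLaplace y s)
      ((volume.restrict (Ioc 0 x)).prod (volume.restrict (Ioi 0))) := by
  have hmeas := measurable_indicatorLaplace y
  rw [integrable_prod_iff (by unfold Function.uncurry; fun_prop)]
  constructor
  · filter_upwards [ae_restrict_mem measurableSet_Ioc] with a ha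
    exact integrableOn_exp_neg_mul_indicatorLaplace ha.1 hy
  · refine ((intervalIntegrable_iff_integrableOn_Ioc_of_le hx).1 <|
      intervalIntegrable_log_add_div_self hx hy).congr ?_
    filter_upwards [ae_restrict_mem measurableSet_Ioc] with a ha
    rw [← integral_exp_neg_mul_indicatorLaplace ha.1 hy]
    exact setIntegral_congr_fun measurableSet_Ioi fun s hs =>
      (norm_of_nonneg <| mul_nonneg (exp_pos _).le (indicatorLaplace_nonneg hy hs)).symm

theorem integral_exp_neg_mul_mul_indicatorLaplace (hx : 0 ≤ x) (y : ℝ) (hs : 0 < s) :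
    ∫ a in Ioc 0 x, exp (-(a * s)) * indicatorLaplace y s =
      indicatorLaplace x s * indicatorLaplace y s := by
  rw [integral_mul_const, ← intervalIntegral.integral_of_le hx, integral_exp_neg_mul x hs.ne']

theorem integrableOn_indicatorLaplace_mul (hx : 0 ≤ x) (hy : 0 ≤ y) :
    IntegrableOn (fun s => indicatorLaplace x s * indicatorLaplace y s) (Ioi 0) :=
  (integrable_exp_neg_mul_indicatorLaplace_prod hx hy).integral_prod_right.congr <| by
    filter_upwards [ae_restrict_mem measurableSet_Ioi] with s hs
    exact integral_exp_neg_mul_mul_indicatorLaplace hx y hs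

theorem integral_indicatorLaplace_mul (hx : 0 ≤ x) (hy : 0 ≤ y) :
    ∫ s in Ioi 0, indicatorLaplace x s * indicatorLaplace y s =
      (x + y) * log (x + y) - x * log x - y * log y := by
  calc ∫ s in Ioi 0, indicatorLaplace x s * indicatorLaplace y s
      = ∫ s in Ioi 0, ∫ a in Ioc 0 x, exp (-(a * s)) * indicatorLaplace y s :=
        setIntegral_congr_fun measurableSet_Ioi fun _ hs =>
          (integral_exp_neg_mul_mul_indicatorLaplace hx y hs).symm
    _ = ∫ a in Ioc 0 x, ∫ s in Ioi 0, exp (-(a * s)) * indicatorLaplace y s :=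
        (integral_integral_swap (integrable_exp_neg_mul_indicatorLaplace_prod hx hy)).symm
    _ = ∫ a in Ioc 0 x, log ((a + y) / a) :=
        setIntegral_congr_fun measurableSet_Ioc fun _ ha =>
          integral_exp_neg_mul_indicatorLaplace ha.1 hy
    _ = (x + y) * log (x + y) - x * log x - y * log y := by
        rw [← intervalIntegral.integral_of_le hx, integral_log_add_div_self hx hy]

theorem memLp_two_indicatorLaplace (hx : 0 ≤ x) :
    MemLp (indicatorLaplace x) 2 (volume.restrict (Ioi 0)) := by
  rw [memLp_two_iff_integrable_sq (measurable_indicatorLaplace x).aestronglyMeasurable]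
  simp only [sq]
  exact integrableOn_indicatorLaplace_mul hx hx

end IndicatorLaplace

section AddRpowAddSelf

open Matrix MeasureTheory Real Set

theorem posDef_add_mul_log_add_sub {ι : Type*} {p : ι → ℝ} (hpos : ∀ i, 0 < p i)
    (hp : Function.Injective p) :
    (of fun i j => (p i + p j) * log (p i + p j) - p i * log (p i) - p j * log (p j)).PosDef := by
  have hmem (i) := memLp_two_indicatorLaplace (hpos i).le
  have hli : LinearIndependent ℝ fun i => (hmem i).toLp (indicatorLaplace (p i)) :=
    linearIndependent_toLp_of_continuousOn isOpen_Ioi hmem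
      (fun i => continuousOn_indicatorLaplace (p i)) <|
      linearIndependent_indicatorLaplace.comp (fun i => ⟨p i, (hpos i).ne'⟩) fun i j hij =>
        hp (congrArg Subtype.val hij)
  simpa only [star_trivial, integral_indicatorLaplace_mul (hpos _).le (hpos _).le] using
    posDef_integral_star_mul hmem hli

theorem add_rpow_add_self {x y : ℝ} (hx : 0 < x) (hy : 0 < y) :
    (x + y) ^ (x + y) =
      x ^ x * exp ((x + y) * log (x + y) - x * log x - y * log y) * y ^ y := by
  rw [rpow_def_of_pos (add_pos hx hy), rpow_def_of_pos hx, rpow_def_of_pos hy, ← exp_add, ← exp_add]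
  ring_nf

theorem stmt_2_general {ι : Type*} {p : ι → ℝ} (hpos : ∀ i, 0 < p i)
    (hp : Function.Injective p) :
    (of fun i j => (p i + p j) ^ (p i + p j)).PosDef := by
  have hexp := posDef_map_exp (posDef_add_mul_log_add_sub hpos hp)
  have hdiag := posDef_star_mul_mul hexp fun i => (rpow_pos_of_pos (hpos i) (p i)).ne'
  simpa only [add_rpow_add_self (hpos _) (hpos _), star_trivial, map_apply, of_apply,
    ← exp_eq_exp_ℝ] using hdiag

end AddRpowAddSelf

/-- The matrix `[(pᵢ + pⱼ)^(pᵢ + pⱼ)]` is positive definite. -/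
theorem stmt_2 (n : ℕ) (p : Fin n → ℝ) (hpos : ∀ i, 0 < p i) (hmono : StrictMono p) :
    Matrix.PosDef (Matrix.of fun i j : Fin n => (p i + p j) ^ (p i + p j)) :=
  stmt_2_general hpos hmono.injective
end

section
/- Let p_1 < p_2 < ... < p_n be positive real numbers and let λ > 0. Then the n×n matrix with (i,j) entry (p_i + p_j)/(p_i + p_j + λ) is conditionally negative definite, i.e. ⟨x, Sx⟩ ≤ 0 for every vector x ∈ ℝ^n with Σ_i x_i = 0. -/
open Matrix

/-!
With `qᵢ = pᵢ + λ / 2` we have `(pᵢ + pⱼ) / (pᵢ + pⱼ + λ) = 1 - λ / (qᵢ + qⱼ)`. The quadratic form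
of the all-ones matrix vanishes on vectors with zero sum, while the Cauchy matrix
`1 / (qᵢ + qⱼ)` is positive semidefinite, being the Gram matrix of the functions
`t ↦ exp (-qᵢ t)` in `L²(0, ∞)`.
-/

open MeasureTheory Set

section GramIntegral

variable {ι α 𝕜 E : Type*} [Finite ι] [MeasurableSpace α] {μ : Measure α}
  [RCLike 𝕜] [NormedAddCommGroup E] [InnerProductSpace 𝕜 E]

open scoped ComplexOrder in
theorem posSemidef_integral_inner {f : ι → α → E} (hf : ∀ i, MemLp (f i) 2 μ) :
    (of fun i j ↦ ∫ t, inner 𝕜 (f i t) (f j t) ∂μ).PosSemidef := by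
  have gram_eq : gram 𝕜 (fun i ↦ (hf i).toLp) = of fun i j ↦ ∫ t, inner 𝕜 (f i t) (f j t) ∂μ := by
    ext i j
    rw [gram_apply, L2.inner_def, of_apply]
    refine integral_congr_ae ?_
    filter_upwards [(hf i).coeFn_toLp, (hf j).coeFn_toLp] with t hi hj
    rw [hi, hj]
  exact gram_eq ▸ posSemidef_gram 𝕜 _

end GramIntegral

section CauchyMatrix

theorem memLp_two_exp_neg_mul_Ioi {q : ℝ} (hq : 0 < q) (c : ℝ) :
    MemLp (fun t ↦ Real.exp (-q * t)) 2 (volume.restrict (Ioi c)) := by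
  refine (memLp_two_iff_integrable_sq (by fun_prop)).2 ?_
  have exp_sq (t : ℝ) : Real.exp (-q * t) ^ 2 = Real.exp (-(2 * q) * t) := by
    rw [← Real.exp_nat_mul]
    ring_nf
  simp only [exp_sq]
  exact integrableOn_exp_mul_Ioi (by linarith) c

theorem integral_exp_neg_mul_mul_exp_neg_mul_Ioi {a b : ℝ} (hab : 0 < a + b) :
    ∫ t in Ioi 0, Real.exp (-a * t) * Real.exp (-b * t) = (a + b)⁻¹ := by
  simp only [← Real.exp_add, ← add_mul, ← neg_add]
  rw [integral_exp_mul_Ioi (by linarith), mul_zero, Real.exp_zero, neg_div_neg_eq, one_div]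

theorem posSemidef_inv_add {ι : Type*} [Finite ι] {q : ι → ℝ} (hq : ∀ i, 0 < q i) :
    (of fun i j ↦ (q i + q j)⁻¹).PosSemidef := by
  have cauchy_eq : of (fun i j ↦ (q i + q j)⁻¹) =
      of fun i j ↦ ∫ t in Ioi 0, inner ℝ (Real.exp (-q i * t)) (Real.exp (-q j * t)) := by
    ext i j
    simp only [of_apply, RCLike.inner_apply', conj_trivial]
    exact (integral_exp_neg_mul_mul_exp_neg_mul_Ioi (add_pos (hq i) (hq j))).symm
  rw [cauchy_eq]
  exact posSemidef_integral_inner fun i ↦ memLp_two_exp_neg_mul_Ioi (hq i) 0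

end CauchyMatrix

section ConditionallyNegativeDefinite

variable {ι : Type*} [Fintype ι]

/-- A conditionally negative definite matrix: a real symmetric matrix whose quadratic form is
nonpositive on the vectors with zero sum. This is the property to be shown of the matrix
`(pᵢ + pⱼ) / (pᵢ + pⱼ + λ)`; despite the traditional name, the inequality is not strict. -/
structure IsCondNegDef (S : Matrix ι ι ℝ) : Prop where
  isSymm : S.IsSymm
  dotProduct_mulVec_nonpos : ∀ x : ι → ℝ, ∑ i, x i = 0 → x ⬝ᵥ S *ᵥ x ≤ 0

theorem dotProduct_add_mulVec_eq_zero (a b : ι → ℝ) {x : ι → ℝ} (hx : ∑ i, x i = 0) :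
    x ⬝ᵥ (of fun i j ↦ a i + b j) *ᵥ x = 0 := by
  have mulVec_eq : (of fun i j ↦ a i + b j) *ᵥ x = fun _ ↦ b ⬝ᵥ x := by
    ext i
    simp only [mulVec, dotProduct, of_apply, add_mul, Finset.sum_add_distrib, ← Finset.mul_sum, hx,
      mul_zero, zero_add]
  rw [mulVec_eq]
  simp only [dotProduct, ← Finset.sum_mul, hx, zero_mul]

theorem isCondNegDef_add_sub_of_posSemidef {A : Matrix ι ι ℝ} (hA : A.PosSemidef) (a : ι → ℝ) :
    IsCondNegDef (of (fun i j ↦ a i + a j) - A) where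
  isSymm := by
    refine .sub (.ext fun i j ↦ ?_) (isHermitian_iff_isSymm.1 hA.isHermitian)
    exact add_comm (a j) (a i)
  dotProduct_mulVec_nonpos x hx := by
    rw [sub_mulVec, dotProduct_sub, dotProduct_add_mulVec_eq_zero a a hx, zero_sub, neg_nonpos]
    exact hA.dotProduct_mulVec_nonneg x

theorem stmt_9_general {p : ι → ℝ} {l : ℝ} (hl : 0 ≤ l) (hp : ∀ i, -(l / 2) < p i) :
    IsCondNegDef (of fun i j ↦ (p i + p j) / (p i + p j + l)) := by
  have cauchy : (of fun i j ↦ ((p i + l / 2) + (p j + l / 2))⁻¹).PosSemidef :=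
    posSemidef_inv_add fun i ↦ by linarith [hp i]
  convert isCondNegDef_add_sub_of_posSemidef (cauchy.smul hl) (fun _ ↦ 1 / 2) using 1
  ext i j
  have denom_ne_zero : p i + p j + l ≠ 0 := by linarith [hp i, hp j]
  simp only [of_apply, Matrix.sub_apply, Matrix.smul_apply, smul_eq_mul]
  rw [show p i + l / 2 + (p j + l / 2) = p i + p j + l by ring]
  field

end ConditionallyNegativeDefinite

/-- For `λ > 0`, the matrix `[(pᵢ + pⱼ)/(pᵢ + pⱼ + λ)]` is conditionally negative
definite. -/
theorem stmt_9 (n : ℕ) (p : Fin n → ℝ) (hpos : ∀ i, 0 < p i) (hmono : StrictMono p)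
    (l : ℝ) (hl : 0 < l) (x : Fin n → ℝ) (hx : ∑ i, x i = 0) :
    x ⬝ᵥ (Matrix.of fun i j : Fin n => (p i + p j) / (p i + p j + l)).mulVec x ≤ 0 :=
  (stmt_9_general hl.le fun i ↦ by linarith [hpos i]).dotProduct_mulVec_nonpos x hx
end

section
/- Let A be the n×n matrix with (i,j) entry (i+j−1)^(i+j−1) for 1 ≤ i, j ≤ n. Then A is strictly totally positive: every minor of A is strictly positive. -/
/-!
By a criterion of Fekete, all minors are positive as soon as those on consecutive rows and columns
are; for a Hankel matrix these are again Hankel determinants, so it suffices that the matrices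
`(a i + a j) ^ (a i + a j)` with distinct positive nodes `a i` are positive definite.

By Schoenberg's theorem on entrywise exponentials this reduces to `∑ c i * c j * F (a i + a j) > 0`
for `F t = t * log t` and nonzero weights `c` summing to zero. Shift all the nodes so that the
argument becomes `t + a i + a j`. The second derivative of the form in `t` is positive, because
`F'' t = 1 / t` gives a Cauchy matrix. As `t → ∞`, `F (t + s)` and `F' (t + s)` are affine in `s` up
to `o(1)`, and affine terms are killed by the condition on `c`; so the form and its first derivative
tend to zero. Hence the first derivative is negative and the form itself is positive.
-/

open Matrix Filter Topology

section QuadraticForms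

variable {ι : Type*} [Fintype ι]

lemma dotProduct_mulVec_self_eq_sum {R : Type*} [CommSemiring R] (M : Matrix ι ι R) (c : ι → R) :
    c ⬝ᵥ M *ᵥ c = ∑ i, ∑ j, c i * c j * M i j := by
  simp only [dotProduct, mulVec, Finset.mul_sum, mul_comm, mul_left_comm]

lemma dotProduct_vecMulVec_mulVec_self {R : Type*} [CommSemiring R] (v c : ι → R) :
    c ⬝ᵥ vecMulVec v v *ᵥ c = (c ⬝ᵥ v) ^ 2 := by
  rw [vecMulVec_mulVec, dotProduct_smul, dotProduct_comm v c]
  simp [sq]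

lemma hasSum_dotProduct_mulVec_self {κ : Type*} {A : κ → Matrix ι ι ℝ} {M : Matrix ι ι ℝ}
    (hA : ∀ i j, HasSum (fun k ↦ A k i j) (M i j)) (c : ι → ℝ) :
    HasSum (fun k ↦ c ⬝ᵥ A k *ᵥ c) (c ⬝ᵥ M *ᵥ c) := by
  simp only [dotProduct_mulVec_self_eq_sum]
  exact hasSum_sum fun i _ ↦ hasSum_sum fun j _ ↦ (hA i j).mul_left _

lemma posDef_of_isSymm {M : Matrix ι ι ℝ} (hM : M.IsSymm) (hpos : ∀ c ≠ 0, 0 < c ⬝ᵥ M *ᵥ c) :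
    M.PosDef :=
  .of_dotProduct_mulVec_pos hM fun {c} hc ↦ hpos c hc

lemma exists_sum_mul_pow_ne_zero {R : Type*} [CommRing R] [IsDomain R] {u c : ι → R}
    (hu : Function.Injective u) (hc : c ≠ 0) : ∃ k : ℕ, ∑ i, c i * u i ^ k ≠ 0 := by
  contrapose! hc
  have hindep := (linearIndependent_monoidHom (Multiplicative ℕ) R).comp _
    ((powersHom R).injective.comp hu)
  refine funext (Fintype.linearIndependent_iff.1 hindep c (funext fun k ↦ ?_))
  simpa [powersHom_apply] using hc k.toAdd

end QuadraticForms

section PosDef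

variable {ι : Type*} [Finite ι]

lemma posSemidef_map_pow_s13 {M : Matrix ι ι ℝ} (hM : M.PosSemidef) (k : ℕ) :
    (M.map (· ^ k)).PosSemidef := by
  induction k with
  | zero =>
    have hones : M.map (· ^ 0) = vecMulVec 1 (star 1) := by
      ext i j
      simp [vecMulVec_apply]
    exact hones ▸ posSemidef_vecMulVec_self_star 1
  | succ k ih =>
    have hsucc : M.map (· ^ (k + 1)) = M.map (· ^ k) ⊙ M := by
      ext i j
      exact pow_succ _ _
    exact hsucc ▸ ih.hadamard hM

lemma posDef_diagonal_congr {A : Matrix ι ι ℝ} (hA : A.PosDef) {w : ι → ℝ}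
    (hw : ∀ i, w i ≠ 0) : (of fun i j ↦ w i * A i j * w j).PosDef := by
  classical
  have := Fintype.ofFinite ι
  have hinj : Function.Injective (diagonal w).vecMul := by
    apply vecMul_injective_of_isUnit
    simpa only [isUnit_diagonal, Pi.isUnit_iff, isUnit_iff_ne_zero] using hw
  convert hA.mul_mul_conjTranspose_same hinj using 1
  ext i j
  simp

theorem posDef_inv_one_sub_mul {u : ι → ℝ} (hu : ∀ i, |u i| < 1) (hinj : Function.Injective u) :
    (of fun i j ↦ (1 - u i * u j)⁻¹).PosDef := by
  have := Fintype.ofFinite ι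
  refine posDef_of_isSymm (ext fun i j ↦ ?_) fun c hc ↦ ?_
  · simp only [transpose_apply, of_apply, mul_comm]
  obtain ⟨k, hk⟩ := exists_sum_mul_pow_ne_zero hinj hc
  have hseries := hasSum_dotProduct_mulVec_self
    (A := fun k : ℕ ↦ vecMulVec (fun i ↦ u i ^ k) fun i ↦ u i ^ k)
    (M := of fun i j ↦ (1 - u i * u j)⁻¹) (fun i j ↦ by
      have huv : |u i * u j| < 1 :=
        abs_mul (u i) (u j) ▸ mul_lt_one_of_nonneg_of_lt_one_left (abs_nonneg _) (hu i) (hu j).le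
      simpa only [vecMulVec_apply, of_apply, mul_pow] using hasSum_geometric_of_abs_lt_one huv) c
  simp only [dotProduct_vecMulVec_mulVec_self] at hseries
  exact (sq_pos_of_ne_zero hk).trans_le (le_hasSum hseries k fun _ _ ↦ sq_nonneg _)

theorem posDef_inv_add {a : ι → ℝ} (ha : ∀ i, 0 < a i) (hinj : Function.Injective a) :
    (of fun i j ↦ (a i + a j)⁻¹).PosDef := by
  -- `u = (a - 1) / (a + 1)` turns the Cauchy kernel into `1 / (1 - u v)` up to diagonal factors.
  let u : ι → ℝ := fun i ↦ 1 - 2 / (a i + 1)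
  have hpos : ∀ i, 0 < a i + 1 := fun i ↦ by linarith [ha i]
  have hu : ∀ i, |u i| < 1 := fun i ↦ by
    have hsub_pos : 0 < 2 / (a i + 1) := div_pos two_pos (hpos i)
    have hsub_lt : 2 / (a i + 1) < 2 := by
      rw [div_lt_iff₀ (hpos i)]
      linarith [ha i]
    rw [abs_lt]
    constructor <;> simp only [u] <;> linarith
  have hu_inj : Function.Injective u := fun i j hij ↦ by
    have hi := (hpos i).ne'
    have hj := (hpos j).ne'
    simp only [u] at hij
    field_simp at hij
    exact hinj (by linarith)
  have hw : ∀ i, √2 / (a i + 1) ≠ 0 := fun i ↦ (div_pos (by positivity) (hpos i)).ne'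
  convert posDef_diagonal_congr (posDef_inv_one_sub_mul hu hu_inj) hw using 1
  ext i j
  have hi := (hpos i).ne'
  have hj := (hpos j).ne'
  have hij := (add_pos (ha i) (ha j)).ne'
  have hkernel : 1 - u i * u j = 2 * (a i + a j) / ((a i + 1) * (a j + 1)) := by
    simp only [u]
    field_simp
    ring
  simp only [of_apply, hkernel]
  field_simp
  norm_num

end PosDef

section SchoenbergExp

variable {ι : Type*} [Fintype ι]

/-- A real matrix is *strictly conditionally positive definite* if it is symmetric and its
quadratic form is positive on nonzero vectors whose coordinates sum to zero; this is the hypothesis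
of Schoenberg's theorem. -/
structure IsCondPosDef (M : Matrix ι ι ℝ) : Prop where
  isSymm : M.IsSymm
  pos : ∀ c ≠ 0, ∑ i, c i = 0 → 0 < c ⬝ᵥ M *ᵥ c

lemma sq_sum_add_le_dotProduct_map_exp {M : Matrix ι ι ℝ} (hM : M.PosSemidef) (c : ι → ℝ) :
    (∑ i, c i) ^ 2 + c ⬝ᵥ M *ᵥ c ≤ c ⬝ᵥ M.map Real.exp *ᵥ c := by
  have hseries := hasSum_dotProduct_mulVec_self
    (A := fun k : ℕ ↦ (k.factorial : ℝ)⁻¹ • M.map (· ^ k)) (M := M.map Real.exp)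
    (fun i j ↦ by
      simpa [Real.exp_eq_exp_ℝ, div_eq_inv_mul] using NormedSpace.expSeries_div_hasSum_exp (M i j))
    c
  have hterms : ∀ k : ℕ, 0 ≤ c ⬝ᵥ ((k.factorial : ℝ)⁻¹ • M.map (· ^ k)) *ᵥ c := fun k ↦
    ((posSemidef_map_pow_s13 hM k).smul (by positivity)).dotProduct_mulVec_nonneg c
  have hpartial := sum_le_hasSum (Finset.range 2) (fun k _ ↦ hterms k) hseries
  rw [Finset.sum_range_succ, Finset.sum_range_one] at hpartial
  simpa [dotProduct_mulVec_self_eq_sum, sq, Finset.sum_mul_sum] using hpartial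

/-- The modification of `M` by terms depending on one index only whose quadratic form at `c` is that
of `M` at `c - (∑ i, c i) • e i₀`, a vector with coordinate sum zero. It links conditional positive
definiteness to positive semidefiniteness in Schoenberg's theorem. -/
def basedAt {R : Type*} [AddCommGroup R] (M : Matrix ι ι R) (i₀ : ι) : Matrix ι ι R :=
  of fun i j ↦ M i j - M i i₀ - M i₀ j + M i₀ i₀

lemma dotProduct_basedAt_mulVec_self {R : Type*} [CommRing R] [DecidableEq ι] (M : Matrix ι ι R)
    (i₀ : ι) (c : ι → R) :
    c ⬝ᵥ basedAt M i₀ *ᵥ c =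
      (c - Pi.single i₀ (∑ i, c i)) ⬝ᵥ M *ᵥ (c - Pi.single i₀ (∑ i, c i)) := by
  have hdecomp : basedAt M i₀ = M - vecMulVec (M.col i₀) 1 - vecMulVec 1 (M.row i₀) +
      M i₀ i₀ • vecMulVec 1 1 := by
    ext i j
    simp [basedAt]
  have hrow : M.row i₀ ⬝ᵥ c = (M *ᵥ c) i₀ := rfl
  rw [hdecomp]
  simp only [sub_mulVec, add_mulVec, smul_mulVec, vecMulVec_mulVec, mulVec_sub, mulVec_single,
    dotProduct_sub, sub_dotProduct, dotProduct_add, dotProduct_smul, single_dotProduct,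
    dotProduct_one, one_dotProduct, hrow, Finset.op_sum, MulOpposite.smul_eq_mul_unop,
    Finset.unop_sum, MulOpposite.unop_op, smul_eq_mul, col_apply]
  ring

namespace IsCondPosDef

variable {M : Matrix ι ι ℝ}

lemma posSemidef_basedAt (hM : IsCondPosDef M) (i₀ : ι) : (basedAt M i₀).PosSemidef := by
  classical
  refine .of_dotProduct_mulVec_nonneg (ext fun i j ↦ ?_) fun c ↦ ?_
  · simp only [basedAt, conjTranspose_apply, of_apply, star_trivial, hM.isSymm.apply]
    ring
  · rw [star_trivial, dotProduct_basedAt_mulVec_self]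
    obtain hc | hc := eq_or_ne (c - Pi.single i₀ (∑ i, c i)) 0
    · simp [hc]
    · exact (hM.pos _ hc (by simp)).le

lemma posDef_map_exp_basedAt (hM : IsCondPosDef M) (i₀ : ι) :
    ((basedAt M i₀).map Real.exp).PosDef := by
  classical
  have hK := hM.posSemidef_basedAt i₀
  refine posDef_of_isSymm (IsSymm.map hK.isHermitian _) fun c hc ↦ ?_
  refine lt_of_lt_of_le ?_ (sq_sum_add_le_dotProduct_map_exp hK c)
  obtain hsum | hsum := eq_or_ne (∑ i, c i) 0
  · rw [dotProduct_basedAt_mulVec_self, hsum]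
    simpa using hM.pos c hc hsum
  · exact add_pos_of_pos_of_nonneg (sq_pos_of_ne_zero hsum) (hK.dotProduct_mulVec_nonneg c)

/-- **Schoenberg's theorem**, strict version. The terms by which `M` and `basedAt M i₀` differ
become a diagonal congruence under the exponential. -/
theorem map_exp (hM : IsCondPosDef M) : (M.map Real.exp).PosDef := by
  cases isEmpty_or_nonempty ι with
  | inl _ => exact posDef_of_isSymm (hM.isSymm.map _) fun c hc ↦ (hc (Subsingleton.elim _ _)).elim
  | inr h =>
    obtain ⟨i₀⟩ := h
    convert posDef_diagonal_congr (hM.posDef_map_exp_basedAt i₀)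
      (w := fun i ↦ Real.exp (M i i₀ - M i₀ i₀ / 2)) (fun i ↦ Real.exp_ne_zero _) using 1
    ext i j
    simp only [basedAt, map_apply, of_apply, ← Real.exp_add, hM.isSymm.apply j i₀]
    ring_nf

end IsCondPosDef

end SchoenbergExp

section HankelForm

variable {ι : Type*} [Fintype ι]

/-- The Hankel quadratic form `∑ i, ∑ j, c i * c j * F (t + (a i + a j))` with nodes `a` and weights
`c`, as a function of the shift `t` through which it is differentiated. -/
def hankelForm (F : ℝ → ℝ) (a c : ι → ℝ) (t : ℝ) : ℝ :=
  c ⬝ᵥ of (fun i j ↦ F (t + (a i + a j))) *ᵥ c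

lemma hankelForm_eq_sum (F : ℝ → ℝ) (a c : ι → ℝ) (t : ℝ) :
    hankelForm F a c t = ∑ i, ∑ j, c i * c j * F (t + (a i + a j)) :=
  dotProduct_mulVec_self_eq_sum _ _

lemma hasDerivAt_hankelForm {F F' : ℝ → ℝ} (hF : ∀ t, 0 < t → HasDerivAt F (F' t) t) {a : ι → ℝ}
    (ha : ∀ i, 0 < a i) (c : ι → ℝ) {t : ℝ} (ht : 0 ≤ t) :
    HasDerivAt (hankelForm F a c) (hankelForm F' a c t) t := by
  rw [funext (hankelForm_eq_sum F a c), hankelForm_eq_sum]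
  refine .fun_sum fun i _ ↦ .fun_sum fun j _ ↦ .const_mul _ ?_
  exact (hF _ (add_pos_of_nonneg_of_pos ht (add_pos (ha i) (ha j)))).comp_add_const t _

lemma sum_sum_mul_affine_eq_zero (a : ι → ℝ) {c : ι → ℝ} (hc : ∑ i, c i = 0) (p q : ℝ) :
    ∑ i, ∑ j, c i * c j * (p + (a i + a j) * q) = 0 := by
  have hsplit : ∀ i j, c i * c j * (p + (a i + a j) * q) =
      c i * p * c j + c i * a i * q * c j + c i * (c j * a j * q) := fun i j ↦ by ring
  simp only [hsplit, Finset.sum_add_distrib, ← Finset.mul_sum, ← Finset.sum_mul, hc, mul_zero,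
    zero_mul, Finset.sum_const_zero, add_zero]

lemma tendsto_hankelForm_zero {F p q : ℝ → ℝ}
    (hF : ∀ s, Tendsto (fun t ↦ F (t + s) - (p t + s * q t)) atTop (𝓝 0)) (a : ι → ℝ) {c : ι → ℝ}
    (hc : ∑ i, c i = 0) : Tendsto (hankelForm F a c) atTop (𝓝 0) := by
  have hremainder : hankelForm F a c = fun t ↦ ∑ i, ∑ j, c i * c j *
      (F (t + (a i + a j)) - (p t + (a i + a j) * q t)) := by
    ext t
    simp only [mul_sub, Finset.sum_sub_distrib, sum_sum_mul_affine_eq_zero a hc, sub_zero,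
      hankelForm_eq_sum]
  rw [hremainder]
  simpa using tendsto_finsetSum _ fun i _ ↦ tendsto_finsetSum _ fun j _ ↦
    (hF (a i + a j)).const_mul (c i * c j)

end HankelForm

section MulLog

lemma pos_of_hasDerivAt_neg_of_tendsto_zero {f f' : ℝ → ℝ} {t₀ : ℝ}
    (hf : ∀ t, t₀ ≤ t → HasDerivAt f (f' t) t) (hf' : ∀ t, t₀ ≤ t → f' t < 0)
    (hlim : Tendsto f atTop (𝓝 0)) : 0 < f t₀ := by
  have hanti : StrictAntiOn f (Set.Ici t₀) := by
    refine strictAntiOn_of_deriv_neg (convex_Ici t₀)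
      (fun t ht ↦ (hf t ht).continuousAt.continuousWithinAt) fun t ht ↦ ?_
    have ht₀ := interior_subset ht
    rw [(hf t ht₀).deriv]
    exact hf' t ht₀
  have hnonneg : 0 ≤ f (t₀ + 1) := by
    refine le_of_tendsto hlim ?_
    filter_upwards [eventually_ge_atTop (t₀ + 1)] with t ht
    exact hanti.antitoneOn (by simp) (Set.mem_Ici.2 (by linarith)) ht
  exact hnonneg.trans_lt (hanti Set.self_mem_Ici (by simp) (by simp))

lemma tendsto_mul_log_taylor_remainder (s : ℝ) :
    Tendsto (fun t : ℝ ↦ (t + s) * Real.log (t + s) - (t * Real.log t + s * (Real.log t + 1)))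
      atTop (𝓝 0) := by
  have hlog := Real.tendsto_log_comp_add_sub_log s
  have hmul : Tendsto (fun t : ℝ ↦ t * (Real.log (t + s) - Real.log t)) atTop (𝓝 s) := by
    refine (Real.tendsto_mul_log_one_add_div_atTop s).congr' ?_
    filter_upwards [eventually_gt_atTop 0, eventually_gt_atTop (-s)] with t ht hts
    rw [← Real.log_div (by linarith) ht.ne', add_div, div_self ht.ne']
  convert ((hmul.add (hlog.const_mul s)).sub_const s) using 2 <;> ring

variable {ι : Type*} {a : ι → ℝ}

lemma hankelForm_inv_pos [Fintype ι] (ha : ∀ i, 0 < a i) (hinj : Function.Injective a)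
    {c : ι → ℝ} (hc : c ≠ 0) {t : ℝ} (ht : 0 ≤ t) : 0 < hankelForm (·⁻¹) a c t := by
  have hshift := (posDef_inv_add (a := fun i ↦ t / 2 + a i) (fun i ↦ by linarith [ha i])
    fun i j hij ↦ hinj (by linarith)).dotProduct_mulVec_pos hc
  have hnodes : ∀ i j, t + (a i + a j) = t / 2 + a i + (t / 2 + a j) := fun i j ↦ by ring
  simpa only [hankelForm, hnodes, star_trivial] using hshift

theorem isCondPosDef_add_mul_log_add [Fintype ι] (ha : ∀ i, 0 < a i)
    (hinj : Function.Injective a) :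
    IsCondPosDef (of fun i j ↦ (a i + a j) * Real.log (a i + a j)) := by
  refine ⟨ext fun i j ↦ by simp [add_comm], fun c hc hsum ↦ ?_⟩
  have hlog_lt : ∀ t, 0 ≤ t → hankelForm (fun t ↦ Real.log t + 1) a c t < 0 := fun t ht ↦ by
    have hderiv : ∀ t, 0 < t → HasDerivAt (fun t ↦ Real.log t + 1) t⁻¹ t := fun t ht ↦
      (Real.hasDerivAt_log ht.ne').add_const 1
    have hlim : Tendsto (hankelForm (fun t ↦ Real.log t + 1) a c) atTop (𝓝 0) :=
      tendsto_hankelForm_zero (p := fun t ↦ Real.log t + 1) (q := 0)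
        (fun s ↦ by simpa using Real.tendsto_log_comp_add_sub_log s) a hsum
    exact neg_pos.1 (pos_of_hasDerivAt_neg_of_tendsto_zero
      (f := -hankelForm (fun t ↦ Real.log t + 1) a c) (f' := -hankelForm (·⁻¹) a c)
      (fun u hu ↦ (hasDerivAt_hankelForm hderiv ha c (ht.trans hu)).neg)
      (fun u hu ↦ neg_neg_of_pos (hankelForm_inv_pos ha hinj hc (ht.trans hu)))
      (neg_zero (G := ℝ) ▸ hlim.neg))
  have hform := pos_of_hasDerivAt_neg_of_tendsto_zero (t₀ := 0)
    (fun t ht ↦ hasDerivAt_hankelForm (fun u hu ↦ Real.hasDerivAt_mul_log hu.ne') ha c ht)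
    hlog_lt (tendsto_hankelForm_zero tendsto_mul_log_taylor_remainder a hsum)
  simpa only [hankelForm, zero_add] using hform

theorem posDef_add_rpow_add [Finite ι] (ha : ∀ i, 0 < a i) (hinj : Function.Injective a) :
    (of fun i j ↦ (a i + a j) ^ (a i + a j)).PosDef := by
  have := Fintype.ofFinite ι
  convert (isCondPosDef_add_mul_log_add ha hinj).map_exp using 1
  ext i j
  rw [of_apply, Real.rpow_def_of_pos (add_pos (ha i) (ha j))]
  simp [mul_comm]

end MulLog

section RowOperations

variable {R : Type*} [CommRing R]

lemma det_eq_det_row_sub_of_first_col_one {l : ℕ}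
    (A : Matrix (Fin (l + 1)) (Fin (l + 1)) R) (hA : ∀ i, A i 0 = 1) :
    A.det = (of fun i j : Fin l ↦ A i.succ j.succ - A i.castSucc j.succ).det := by
  have hdiff : A.det = (of (Fin.cons (A 0) fun i j ↦ A i.succ j - A i.castSucc j)).det :=
    det_eq_of_forall_row_eq_smul_add_pred (fun _ ↦ 1) (by simp) (by simp)
  rw [hdiff, det_succ_column_zero, Fin.sum_univ_succ]
  simp only [of_apply, Fin.cons_zero, Fin.cons_succ, hA, sub_self, mul_zero, zero_mul,
    Finset.sum_const_zero, add_zero, Fin.val_zero, pow_zero, mul_one, one_mul, Fin.succAbove_zero]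
  rfl

lemma det_sum_rows {l : ℕ} {κ : Type*} (D : Matrix κ (Fin l) R) (s : Fin l → Finset κ) :
    (of fun i j ↦ ∑ t ∈ s i, D t j).det =
      ∑ g ∈ Fintype.piFinset s, (D.submatrix g id).det := by
  have hrows : (of fun i j ↦ ∑ t ∈ s i, D t j) = fun i ↦ ∑ t ∈ s i, D.row t := by
    ext i j
    rw [Finset.sum_apply]
    rfl
  rw [hrows]
  exact (detRowAlternating (R := R)).toMultilinearMap.map_sum_finset (fun _ t ↦ D.row t) s

variable [LinearOrder R] [IsStrictOrderedRing R]

lemma det_sum_Ico_pos {l : ℕ} {D : Matrix ℕ (Fin l) R}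
    (hD : ∀ g : Fin l → ℕ, StrictMono g → 0 < (D.submatrix g id).det)
    {f : Fin (l + 1) → ℕ} (hf : StrictMono f) :
    0 < (of fun i j ↦ ∑ t ∈ Finset.Ico (f i.castSucc) (f i.succ), D t j).det := by
  rw [det_sum_rows]
  refine Finset.sum_pos (fun g hg ↦ hD g fun a b hab ↦ ?_)
    (Fintype.piFinset_nonempty.2 fun i ↦ Finset.nonempty_Ico.2 (hf i.castSucc_lt_succ))
  have hg : ∀ i, f i.castSucc ≤ g i ∧ g i < f i.succ := fun i ↦
    Finset.mem_Ico.1 (Fintype.mem_piFinset.1 hg i)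
  calc g a < f a.succ := (hg a).2
    _ ≤ f b.castSucc := hf.monotone (by simpa [Fin.le_def] using hab)
    _ ≤ g b := (hg b).1

end RowOperations

section Fekete

variable {R : Type*} [Field R]

lemma det_eq_prod_mul_det_normalized_row_sub {l : ℕ}
    (A : Matrix (Fin (l + 1)) (Fin (l + 1)) R) (hA : ∀ i, A i 0 ≠ 0) :
    A.det = (∏ i, A i 0) * (of fun i j : Fin l ↦
      A i.succ j.succ / A i.succ 0 - A i.castSucc j.succ / A i.castSucc 0).det := by
  have hscale : A = of fun i j ↦ A i 0 * (of fun i j ↦ A i j / A i 0) i j := by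
    ext i j
    exact (mul_div_cancel₀ _ (hA i)).symm
  conv_lhs => rw [hscale]
  rw [det_mul_column, det_eq_det_row_sub_of_first_col_one _ fun i ↦ div_self (hA i)]
  rfl

/-- The differences of consecutive rows after scaling every row to have first entry `1`, with the
resulting zero column dropped. This is the inductive step of Fekete's criterion; rows are indexed by
`ℕ` so that consecutive blocks of rows need no bounds. -/
def normalizedRowDiff {l : ℕ} (A : Matrix ℕ (Fin (l + 1)) R) : Matrix ℕ (Fin l) R :=
  of fun t j ↦ A (t + 1) j.succ / A (t + 1) 0 - A t j.succ / A t 0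

lemma sum_Ico_normalizedRowDiff {l : ℕ} (A : Matrix ℕ (Fin (l + 1)) R) {s t : ℕ} (hst : s ≤ t)
    (j : Fin l) : ∑ r ∈ Finset.Ico s t, normalizedRowDiff A r j =
      A t j.succ / A t 0 - A s j.succ / A s 0 :=
  Finset.sum_Ico_sub (fun r ↦ A r j.succ / A r 0) hst

variable [LinearOrder R] [IsStrictOrderedRing R]

/-- **Fekete's criterion** for maximal minors. A row difference across a gap telescopes into
consecutive ones, so a minor expands multilinearly into maximal minors of `normalizedRowDiff A`. -/
theorem det_submatrix_pos_of_consecutive_rows {l : ℕ} (A : Matrix ℕ (Fin l) R)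
    (hA : ∀ m (hm : m ≤ l) r, 0 < (A.submatrix (fun i : Fin m ↦ r + i) (Fin.castLE hm)).det)
    {f : Fin l → ℕ} (hf : StrictMono f) : 0 < (A.submatrix f id).det := by
  induction l with
  | zero => simp
  | succ l ih =>
    have hcol : ∀ t, 0 < A t 0 := fun t ↦ by simpa using hA 1 (by simp) t
    have hminor : ∀ m (hm : m ≤ l) r, 0 < ((normalizedRowDiff A).submatrix
        (fun i : Fin m ↦ r + i) (Fin.castLE hm)).det := fun m hm r ↦ by
      have hbordered := hA (m + 1) (Nat.succ_le_succ hm) r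
      rw [det_eq_prod_mul_det_normalized_row_sub
        (A.submatrix (fun i : Fin (m + 1) ↦ r + i) (Fin.castLE (Nat.succ_le_succ hm)))
        fun i ↦ (hcol (r + i)).ne'] at hbordered
      exact pos_of_mul_pos_right hbordered (Finset.prod_nonneg fun i _ ↦ (hcol (r + i)).le)
    rw [det_eq_prod_mul_det_normalized_row_sub (A.submatrix f id) fun i ↦ (hcol (f i)).ne']
    refine mul_pos (Finset.prod_pos fun i _ ↦ hcol (f i)) ?_
    convert det_sum_Ico_pos (fun g hg ↦ ih _ hminor hg) hf using 3
    ext i j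
    exact (sum_Ico_normalizedRowDiff A (hf.monotone i.castSucc_lt_succ.le) j).symm

theorem det_hankel_pos {a : ℕ → R}
    (ha : ∀ k r, 0 < (of fun i j : Fin k ↦ a (r + (i + j))).det)
    {k : ℕ} {f g : Fin k → ℕ} (hf : StrictMono f) (hg : StrictMono g) :
    0 < (of fun i j ↦ a (f i + g j)).det := by
  have hrows : ∀ {m : ℕ} {h : Fin m → ℕ}, StrictMono h → ∀ r,
      0 < (of fun i j : Fin m ↦ a (r + (h i + j))).det := fun {m h} hh r ↦
    det_submatrix_pos_of_consecutive_rows (of fun (i : ℕ) (j : Fin m) ↦ a (r + (i + j)))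
      (fun m' _ s ↦ by simpa [submatrix, add_assoc] using ha m' (r + s)) hh
  refine det_submatrix_pos_of_consecutive_rows (of fun i j ↦ a (i + g j)) (fun m hm r ↦ ?_) hf
  rw [← det_transpose]
  convert hrows (hg.comp (Fin.strictMono_castLE hm)) r using 3
  ext i j
  simp [add_comm, add_left_comm]

end Fekete

theorem stmt_13_general {x h : ℝ} (hx : 0 < x) (hh : 0 < h) {k : ℕ} {f g : Fin k → ℕ}
    (hf : StrictMono f) (hg : StrictMono g) :
    0 < (of fun i j ↦ (x + (f i + g j : ℕ) * h) ^ (x + (f i + g j : ℕ) * h)).det := by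
  refine det_hankel_pos (a := fun m ↦ (x + m * h) ^ (x + m * h)) (fun m r ↦ ?_) hf hg
  let node : Fin m → ℝ := fun i ↦ (x + r * h) / 2 + i * h
  have hpos : ∀ i, 0 < node i := fun i ↦ by positivity
  have hinj : Function.Injective node := fun i j hij ↦ by
    simpa [node, hh.ne', Fin.val_inj] using hij
  convert (posDef_add_rpow_add hpos hinj).det_pos using 2
  ext i j
  have hsum : x + (r + (i + j) : ℕ) * h = node i + node j := by
    simp only [node]
    push_cast
    ring
  simp only [of_apply, hsum]

/-- The matrix `A = [(i+j−1)^(i+j−1)]` (indices running from 1 to n) is strictly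
totally positive: every minor is strictly positive. -/
theorem stmt_13 (n : ℕ)
    (k : ℕ) (f g : Fin k → Fin n) (hf : StrictMono f) (hg : StrictMono g) :
    0 < ((Matrix.of fun i j : Fin n =>
        ((((i : ℕ) + 1 + ((j : ℕ) + 1) - 1) ^ ((i : ℕ) + 1 + ((j : ℕ) + 1) - 1) : ℕ) :
          ℝ)).submatrix f g).det := by
  convert stmt_13_general one_pos one_pos (Fin.val_strictMono.comp hf) (Fin.val_strictMono.comp hg)
    using 2
  ext i j
  have hbase : (1 : ℝ) + ((f i : ℕ) + (g j : ℕ) : ℕ) * 1 =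
      ((f i : ℕ) + 1 + ((g j : ℕ) + 1) - 1 : ℕ) := by
    rw [mul_one, ← Nat.cast_one, ← Nat.cast_add]
    congr 1
    omega
  simp only [submatrix_apply, of_apply, Function.comp_apply, hbase, Real.rpow_natCast,
    Nat.cast_pow]
end
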